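/- arXiv:1709.00639 — 2 statements merged into one kernel-verified Lean document; each statement's English description precedes it below -/
import Mathlib

section
/- Let p be a prime, A a set, n ≥ 1, and let f: ℙ(ℚ^{n+1}) → A be a map that is invariant under ℚ^×-scaling and induced via a ℤ_(p)-lattice B ⊂ ℚ^{n+1}. For x̄ ∈ ℙ(B/pB), let N_{x̄,B} := ρ_B^{-1}(x̄) ⊆ ℙ(ℚ^{n+1}) be the fiber of the reduction map over x̄. If B′ is another f-compatible ℤ_(p)-lattice in ℚ^{n+1} such that N_{x̄′,B′} = N_{x̄,B} for some x̄ ∈ ℙ(B/pB) and some x̄′ ∈ ℙ(B′/pB′), then B′ is equivalent to B. -/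
/- Common set-up for statements about projective spaces `ℙ(V)`: flag maps,
   `ℤ_(p)`-lattices and the associated reduction maps to `ℙ(B/pB)`
   (two nonzero vectors are identified by `ρ_B` iff suitable nonzero scalar
   multiples of them lie in `B ∖ pB` and are congruent modulo `pB`). -/

universe u v w

section PreludeB

variable {k : Type u} [Field k] {V : Type v} [AddCommGroup V] [Module k V] {A : Type w}

/-- The projective subspace `ℙ(W) ⊆ ℙ(V)` attached to a submodule `W ⊆ V`. -/
def psub (W : Submodule k V) : Set (Projectivization k V) :=
  {x | ∃ v : V, ∃ h : v ≠ 0, Projectivization.mk k v h = x ∧ v ∈ W}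

/-- The projective line of `ℙ(V)` through the classes of two (independent)
vectors `v`, `w`. -/
def lineP (v w : V) : Set (Projectivization k V) :=
  {x | ∃ a b : k, ∃ h : a • v + b • w ≠ 0, Projectivization.mk k (a • v + b • w) h = x}

/-- `f` is a flag map on the finite-dimensional projective subspace `ℙ(W)`:
there is a chain (flag) of subspaces of `W` such that `f` is constant on each
successive difference. -/
def ChainFlagOn (f : Projectivization k V → A) (W : Submodule k V) : Prop :=
  ∃ c : ℕ → Submodule k V, c 0 = ⊥ ∧ (∃ n, c n = W) ∧ (∀ i, c i ≤ c (i + 1)) ∧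
    (∀ i, c i ≤ W) ∧
    ∀ i, ∀ x ∈ psub (c (i + 1)) \ psub (c i), ∀ y ∈ psub (c (i + 1)) \ psub (c i), f x = f y

/-- A flag map on a projective space over `F_p` (possibly infinite-dimensional):
the restriction to every finite-dimensional projective subspace is a flag map. -/
def FpFlagMap (f : Projectivization k V → A) : Prop :=
  ∀ W : Submodule k V, FiniteDimensional k W → ChainFlagOn f W

end PreludeB

section PreludeBQ

variable {V : Type v} [AddCommGroup V] [Module ℚ V] {A : Type w}

/-- The `ℤ_(p)`-span of a finite set of vectors (coefficients are rationals
with denominator coprime to `p`). -/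
def zpSpanV (p : ℕ) (s : Finset V) : Set V :=
  {z | ∃ f : V → ℚ, (∀ t, ¬ (p ∣ (f t).den)) ∧ z = ∑ t ∈ s, f t • t}

/-- `p·B`. -/
def pSMul (p : ℕ) (B : Set V) : Set V := {z | ∃ b ∈ B, z = (p : ℚ) • b}

/-- `B` is a `ℤ_(p)`-lattice in the `ℚ`-subspace `W`: a finitely generated
`ℤ_(p)`-submodule spanning `W` over `ℚ`. -/
def IsZpLatIn (p : ℕ) (W : Submodule ℚ V) (B : Set V) : Prop :=
  (∃ s : Finset V, B = zpSpanV p s) ∧ Submodule.span ℚ B = W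

/-- Two nonzero vectors have the same image under the reduction map
`ρ_B : ℙ(V) → ℙ(B/pB)`. -/
def ZpRelV (p : ℕ) (B : Set V) (x y : V) : Prop :=
  ∃ x' y' : V, (∃ a : ℚ, a ≠ 0 ∧ x' = a • x) ∧ (∃ b : ℚ, b ≠ 0 ∧ y' = b • y) ∧
    x' ∈ B ∧ x' ∉ pSMul p B ∧ y' ∈ B ∧ y' ∉ pSMul p B ∧ x' - y' ∈ pSMul p B

/-- Equivalence of lattices: `B' = a·B` for some `a ∈ ℚ^×`. -/
def LatEq (B B' : Set V) : Prop := ∃ a : ℚ, a ≠ 0 ∧ B' = (fun t => a • t) '' B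

/-- `f`, restricted to `ℙ(W)`, is induced via the lattice `B` (i.e. it factors
through the reduction map `ρ_B`); such lattices are called `f`-compatible. -/
def InducedOn (f : Projectivization ℚ V → A) (W : Submodule ℚ V) (p : ℕ) (B : Set V) : Prop :=
  ∀ x y : V, ∀ (hx : x ≠ 0) (hy : y ≠ 0), x ∈ W → y ∈ W → ZpRelV p B x y →
    f (Projectivization.mk ℚ x hx) = f (Projectivization.mk ℚ y hy)

/-- Preimage in `V` of the line of `ℙ(B/pB)` through the residue classes of
`q` and `w`. -/
def resLineV (p : ℕ) (B : Set V) (q w : V) : Set V :=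
  {z | ∃ a b : ℚ, ¬ (p ∣ a.den) ∧ ¬ (p ∣ b.den) ∧ ∃ y ∈ pSMul p B, z = a • q + b • w + y}

/-- `f` is induced via `B` from a flag map on the residue projective *line*
`ℙ(B/pB)`, i.e. from a map constant off one point (the class of `q`). -/
def ResFlagLine (f : Projectivization ℚ V → A) (p : ℕ) (B : Set V) : Prop :=
  ∃ q : V, q ∈ B \ pSMul p B ∧
    ∀ x y : V, ∀ (hx : x ≠ 0) (hy : y ≠ 0), ¬ ZpRelV p B x q → ¬ ZpRelV p B y q →
      f (Projectivization.mk ℚ x hx) = f (Projectivization.mk ℚ y hy)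

/-- `f` is induced via `B` from a flag map on the residue projective *plane*
`ℙ(B/pB)`: for a flag (point `q̄`) ∈ (line `l̄` through `q̄` and `w̄`), the map
is constant off `l̄` and constant on `l̄ ∖ {q̄}`. -/
def ResFlagPlane (f : Projectivization ℚ V → A) (p : ℕ) (B : Set V) : Prop :=
  ∃ q w : V, q ∈ B \ pSMul p B ∧ w ∈ B \ pSMul p B ∧ ¬ ZpRelV p B q w ∧
    (∀ x y : V, ∀ (hx : x ≠ 0) (hy : y ≠ 0),
      (∃ a : ℚ, a ≠ 0 ∧ a • x ∈ (B \ pSMul p B) ∧ a • x ∉ resLineV p B q w) →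
      (∃ b : ℚ, b ≠ 0 ∧ b • y ∈ (B \ pSMul p B) ∧ b • y ∉ resLineV p B q w) →
      f (Projectivization.mk ℚ x hx) = f (Projectivization.mk ℚ y hy)) ∧
    (∀ x y : V, ∀ (hx : x ≠ 0) (hy : y ≠ 0),
      (∃ a : ℚ, a ≠ 0 ∧ a • x ∈ resLineV p B q w \ pSMul p B) → ¬ ZpRelV p B x q →
      (∃ b : ℚ, b ≠ 0 ∧ b • y ∈ resLineV p B q w \ pSMul p B) → ¬ ZpRelV p B y q →
      f (Projectivization.mk ℚ x hx) = f (Projectivization.mk ℚ y hy))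

/-- `f` is induced via `B` from a *flag map* `f̄ : ℙ(B/pB) → A` (general
dimension): there is a chain of sublattices from `pB` to `B` (i.e. a flag of
subspaces of `B/pB`) with `f` constant on each successive difference. -/
def ResChainFlagOn (f : Projectivization ℚ V → A) (p : ℕ) (B : Set V) : Prop :=
  ∃ c : ℕ → Set V, c 0 = pSMul p B ∧ (∃ n, c n = B) ∧ (∀ i, c i ⊆ c (i + 1)) ∧
    (∀ i, (∀ x ∈ c i, ∀ y ∈ c i, x + y ∈ c i) ∧
      (∀ q : ℚ, ¬ (p ∣ q.den) → ∀ x ∈ c i, q • x ∈ c i)) ∧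
    ∀ i, ∀ x y : V, ∀ (hx : x ≠ 0) (hy : y ≠ 0),
      (∃ a : ℚ, a ≠ 0 ∧ a • x ∈ c (i + 1) \ c i) →
      (∃ b : ℚ, b ≠ 0 ∧ b • y ∈ c (i + 1) \ c i) →
      f (Projectivization.mk ℚ x hx) = f (Projectivization.mk ℚ y hy)

/-- `f` is a flag map on the finite-dimensional projective subspace
`ℙ(W) ⊆ ℙ(V)` over `ℚ`: either a chain (flag) of subspaces as over any field,
or induced via a `ℤ_(p)`-lattice `B` in `W` from a flag map on `ℙ(B/pB)`. -/
def QFlagOn (f : Projectivization ℚ V → A) (W : Submodule ℚ V) : Prop :=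
  ChainFlagOn f W ∨
    ∃ p : ℕ, p.Prime ∧ ∃ B : Set V, IsZpLatIn p W B ∧ ResChainFlagOn f p B

/-- A flag map on `ℙ(V)` over `ℚ` (possibly infinite-dimensional): the
restriction to every finite-dimensional projective subspace is a flag map. -/
def QFlagMap (f : Projectivization ℚ V → A) : Prop :=
  ∀ W : Submodule ℚ V, FiniteDimensional ℚ W → QFlagOn f W

end PreludeBQ

/-! Let `O ≠ K` be a valuation ring of `K` with maximal ideal `𝔪`, and let `M`, `N` be finitely
generated `O`-submodules of `V` for which two reduction fibres agree. After rescaling `M`, both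
are fibres over the class of the same vector `x`, primitive in `M` and in `N`. As `N` is free,
some linear form `φ` has `φ x = 1` and `φ(N) ⊆ O`. It has no zero on the cone of `x` in `N`, hence
none on `x + 𝔪M`, which forces `φ(M) ⊆ O`. For `y ∈ 𝔪M`, the vector `x + y` has a multiple
`c(x + y) ∈ x + 𝔪N`; applying `φ` gives `c ≡ 1` mod `𝔪`, so `y ∈ 𝔪N`. Thus `𝔪M ⊆ 𝔪N`, so
`M ⊆ N`, and equality holds by symmetry. -/

section ResidueCone

open IsLocalRing Module
open scoped Pointwise

variable {K V : Type*} [Field K] [AddCommGroup V] [Module K V] {O : ValuationSubring K}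

/-- `x` is a primitive vector of the `O`-module `M`: it lies in `M` and has a nonzero class in
`M / 𝔪M`, hence defines a point of `ℙ(M / 𝔪M)`. -/
def IsPrimitiveIn (M : Submodule O V) (x : V) : Prop :=
  x ∈ M ∧ x ∉ maximalIdeal O • M

/-- The vectors `v` whose class in `ℙ(V)` reduces to the class of `x` in `ℙ(M / 𝔪M)`, for `x`
primitive in `M`. The scalar `c` is then automatically nonzero. -/
def residueCone (M : Submodule O V) (x : V) : Set V :=
  {v | ∃ c : K, c • v - x ∈ maximalIdeal O • M}

variable {M N : Submodule O V} {x y : V}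

lemma smul_mem_maximalIdeal_smul {c : K} (hc : O.valuation c < 1) (hx : x ∈ M) :
    c • x ∈ maximalIdeal O • M :=
  Submodule.smul_mem_smul (r := ⟨c, (O.valuation_le_one_iff c).1 hc.le⟩)
    ((O.valuation_lt_one_iff _).2 hc) hx

lemma valuation_map_lt_one {φ : V →ₗ[K] K} (hφ : ∀ b ∈ M, φ b ∈ O)
    (hy : y ∈ maximalIdeal O • M) : O.valuation (φ y) < 1 := by
  refine Submodule.smul_induction_on hy (fun r hr b hb => ?_) fun y z hy hz => ?_
  · have hsmul : φ (r • b) = r * φ b := map_smul φ (r : K) b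
    rw [hsmul, map_mul]
    exact mul_lt_one_of_lt_of_le ((O.valuation_lt_one_iff r).1 hr)
      ((O.valuation_le_one_iff _).2 (hφ b hb))
  · exact map_add φ y z ▸ O.valuation.map_add_lt hy hz

lemma IsPrimitiveIn.of_sub_mem (hx : IsPrimitiveIn M x)
    (hyx : y - x ∈ maximalIdeal O • M) : IsPrimitiveIn M y := by
  refine ⟨?_, fun hy => hx.2 ?_⟩
  · exact (M.sub_mem_iff_left hx.1).1 (Submodule.smul_le_right hyx)
  · exact (Submodule.sub_mem_iff_right _ hy).1 hyx

lemma IsPrimitiveIn.valuation_le_one {c : K} (hx : IsPrimitiveIn M x) (hcx : c • x ∈ M) :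
    O.valuation c ≤ 1 := by
  by_contra! hc
  have hc0 : c ≠ 0 := by
    rintro rfl
    simp at hc
  have hinv : O.valuation c⁻¹ < 1 := by rw [map_inv₀]; exact inv_lt_one_of_one_lt₀ hc
  exact hx.2 (by simpa [smul_smul, hc0] using smul_mem_maximalIdeal_smul hinv hcx)

lemma IsPrimitiveIn.valuation_eq_one {c : K} (hx : IsPrimitiveIn M x)
    (hcx : IsPrimitiveIn M (c • x)) : O.valuation c = 1 :=
  (hx.valuation_le_one hcx.1).antisymm <|
    not_lt.1 fun hc => hcx.2 (smul_mem_maximalIdeal_smul hc hx.1)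

lemma mem_residueCone_self : x ∈ residueCone M x :=
  ⟨1, by simp⟩

lemma IsPrimitiveIn.ne_zero_of_mem_residueCone (hx : IsPrimitiveIn M x)
    {v : V} (hv : v ∈ residueCone M x) : v ≠ 0 := by
  rintro rfl
  obtain ⟨c, hc⟩ := hv
  exact hx.2 (by simpa using hc)

lemma residueCone_congr (hxy : x - y ∈ maximalIdeal O • M) :
    residueCone M x = residueCone M y := by
  ext v
  refine exists_congr fun c => ?_
  rw [← sub_add_sub_cancel (c • v) x y, Submodule.add_mem_iff_left _ hxy]

lemma free_of_fg (hM : M.FG) : Module.Free O M := by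
  have := Module.Finite.iff_fg.2 hM
  have : Module.IsTorsionFree O V := .trans_faithfulSMul O K V
  have : Module.Flat O M := Module.Flat.flat_iff_torsion_eq_bot_of_isBezout.2 <|
    Submodule.isTorsionFree_iff_torsion_eq_bot.1 inferInstance
  exact Module.free_of_flat_of_isLocalRing

lemma exists_dual_extending (hM : M.FG) (ψ : M →ₗ[O] O) :
    ∃ φ : V →ₗ[K] K, ∀ b : M, φ b = ψ b := by
  have := free_of_fg hM
  let e := Free.chooseBasis O M
  have hli : LinearIndependent K fun i => (e i : V) :=
    (LinearIndependent.iff_fractionRing O K).1 (e.linearIndependent.map' M.subtype M.ker_subtype)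
  obtain ⟨φ, hφ⟩ := ((Basis.span hli).constr K fun i => (ψ (e i) : K)).exists_extend
  have hφe : ∀ i, φ (e i) = ψ (e i) := fun i => by
    have hb := LinearMap.congr_fun hφ (Basis.span hli i)
    rwa [Basis.constr_basis, LinearMap.comp_apply, Submodule.subtype_apply,
      Basis.span_apply] at hb
  have hcomp : (φ.restrictScalars O) ∘ₗ M.subtype = (Algebra.linearMap O K) ∘ₗ ψ := e.ext hφe
  exact ⟨φ, LinearMap.congr_fun hcomp⟩

lemma sum_repr_smul_coe {ι : Type*} [Fintype ι] (e : Basis ι O M) (hy : y ∈ M) :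
    ∑ i, (e.repr ⟨y, hy⟩ i : K) • (e i : V) = y := by
  have h := congrArg M.subtype (e.sum_repr ⟨y, hy⟩)
  rwa [map_sum] at h

lemma IsPrimitiveIn.exists_dual (hM : M.FG) (hx : IsPrimitiveIn M x) :
    ∃ φ : V →ₗ[K] K, φ x = 1 ∧ ∀ b ∈ M, φ b ∈ O := by
  have := Module.Finite.iff_fg.2 hM
  have := free_of_fg hM
  let e := Free.chooseBasis O M
  obtain ⟨i, hi⟩ : ∃ i, e.repr ⟨x, hx.1⟩ i ∉ maximalIdeal O := by
    by_contra! hcoord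
    exact hx.2 <| sum_repr_smul_coe e hx.1 ▸ sum_mem fun i _ =>
      Submodule.smul_mem_smul (hcoord i) (e i).2
  obtain ⟨u, hu⟩ := IsLocalRing.notMem_maximalIdeal.1 hi
  obtain ⟨φ, hφ⟩ := exists_dual_extending hM (u⁻¹ • e.coord i)
  refine ⟨φ, ?_, fun b hb => hφ ⟨b, hb⟩ ▸ SetLike.coe_mem _⟩
  rw [hφ ⟨x, hx.1⟩]
  simp [← hu, Units.smul_def]

lemma mem_of_forall_mul_ne_one {a : K} (ha : ∀ c : K, O.valuation c < 1 → c * a ≠ 1) :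
    a ∈ O := by
  by_contra h
  have hlt : 1 < O.valuation a := not_le.1 (mt (O.valuation_le_one_iff a).1 h)
  have ha0 : a ≠ 0 := by
    rintro rfl
    exact h O.zero_mem
  exact ha a⁻¹ (by rw [map_inv₀]; exact inv_lt_one_of_one_lt₀ hlt) (inv_mul_cancel₀ ha0)

lemma mem_of_forall_dual_mem (hM : M.FG) {a : K} (ha : a ≠ 0) (hay : a • y ∈ M)
    (h : ∀ φ : V →ₗ[K] K, (∀ b ∈ M, φ b ∈ O) → φ y ∈ O) : y ∈ M := by
  have := Module.Finite.iff_fg.2 hM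
  have := free_of_fg hM
  let e := Free.chooseBasis O M
  have hcoord : ∀ i, a⁻¹ * e.repr ⟨a • y, hay⟩ i ∈ O := fun i => by
    obtain ⟨φ, hφ⟩ := exists_dual_extending hM (e.coord i)
    have hφy : φ y = a⁻¹ * e.repr ⟨a • y, hay⟩ i := by
      rw [← Basis.coord_apply, ← hφ, map_smul, smul_eq_mul, inv_mul_cancel_left₀ ha]
    exact hφy ▸ h φ fun b hb => hφ ⟨b, hb⟩ ▸ SetLike.coe_mem _
  have hsum : y = ∑ i, (a⁻¹ * e.repr ⟨a • y, hay⟩ i) • (e i : V) := by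
    simp_rw [mul_smul, ← Finset.smul_sum]
    rw [sum_repr_smul_coe, inv_smul_smul₀ ha]
  rw [hsum]
  exact sum_mem fun i _ => M.smul_mem ⟨_, hcoord i⟩ (e i).2

lemma le_of_maximalIdeal_smul_le (hO : O ≠ ⊤) (hN : N.FG)
    (h : maximalIdeal O • M ≤ maximalIdeal O • N) : M ≤ N := by
  intro b hb
  obtain ⟨m, hm0, hm⟩ : ∃ m : K, m ≠ 0 ∧ O.valuation m < 1 := by
    obtain ⟨a, -, ha⟩ := SetLike.exists_of_lt hO.lt_top
    have ha' : a ≠ 0 := fun h0 => ha (h0 ▸ O.zero_mem)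
    exact ⟨a⁻¹, inv_ne_zero ha', O.inv_mem_nonunits_iff.2 (.inr ha)⟩
  have hmb : m • b ∈ N := Submodule.smul_le_right (h (smul_mem_maximalIdeal_smul hm hb))
  refine mem_of_forall_dual_mem hN hm0 hmb fun φ hφ => mem_of_forall_mul_ne_one fun c hc hcb => ?_
  have hlt := valuation_map_lt_one hφ (h (smul_mem_maximalIdeal_smul hc hb))
  rw [map_smul, smul_eq_mul, hcb, map_one] at hlt
  exact hlt.false

lemma map_mem_of_residueCone_subset {φ : V →ₗ[K] K} (hφx : φ x = 1) (hφ : ∀ b ∈ N, φ b ∈ O)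
    (h : residueCone M x ⊆ residueCone N x) {b : V} (hb : b ∈ M) : φ b ∈ O := by
  refine mem_of_forall_mul_ne_one fun m hm hmb => ?_
  have hcone : x - m • b ∈ residueCone M x :=
    ⟨1, by simpa using smul_mem_maximalIdeal_smul hm hb⟩
  obtain ⟨c, hc⟩ := h hcone
  have hlt := valuation_map_lt_one hφ hc
  simp [hφx, hmb] at hlt

lemma maximalIdeal_smul_le_of_residueCone_subset (hN : N.FG) (hx : IsPrimitiveIn N x)
    (h : residueCone M x ⊆ residueCone N x) : maximalIdeal O • M ≤ maximalIdeal O • N := by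
  intro y hy
  obtain ⟨φ, hφx, hφN⟩ := hx.exists_dual hN
  have hφM : ∀ b ∈ M, φ b ∈ O := fun b hb => map_mem_of_residueCone_subset hφx hφN h hb
  obtain ⟨c, hc⟩ := h (⟨1, by simpa using hy⟩ : x + y ∈ residueCone M x)
  have hφy : O.valuation (φ y) < 1 := valuation_map_lt_one hφM hy
  have hφc : O.valuation (c * (1 + φ y) - 1) < 1 := by
    simpa only [map_sub, map_smul, map_add, hφx, smul_eq_mul] using valuation_map_lt_one hφN hc
  have hvc : O.valuation c = 1 := by
    have := O.valuation.map_one_add_of_lt hφc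
    rwa [add_sub_cancel, map_mul, O.valuation.map_one_add_of_lt hφy, mul_one] at this
  have hc1 : O.valuation (c - 1) < 1 := by
    have := O.valuation.map_sub_lt hφc (show O.valuation (c * φ y) < 1 by simp [hvc, hφy])
    rwa [show c * (1 + φ y) - 1 - c * φ y = c - 1 by ring] at this
  have hcy : c • y ∈ maximalIdeal O • N := by
    convert sub_mem hc (smul_mem_maximalIdeal_smul hc1 hx.1) using 1
    module
  have hc0 : c ≠ 0 := O.valuation.ne_zero_iff.1 (by simp [hvc])
  have hcinv : c⁻¹ ∈ O := (O.valuation_le_one_iff _).1 (by simp [hvc])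
  rw [← inv_smul_smul₀ hc0 y]
  exact (maximalIdeal O • N).smul_mem ⟨c⁻¹, hcinv⟩ hcy

lemma le_of_residueCone_subset (hO : O ≠ ⊤) (hN : N.FG) (hx : IsPrimitiveIn N x)
    (h : residueCone M x ⊆ residueCone N x) : M ≤ N :=
  le_of_maximalIdeal_smul_le hO hN (maximalIdeal_smul_le_of_residueCone_subset hN hx h)

lemma smul_mem_units_smul_iff (a : Kˣ) : a • x ∈ a • M ↔ x ∈ M :=
  Set.smul_mem_smul_set_iff₀ a.ne_zero (M : Set V) x

lemma maximalIdeal_smul_units_smul (a : Kˣ) :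
    maximalIdeal O • (a • M) = a • (maximalIdeal O • M) :=
  (Submodule.map_smul'' _ _ _).symm

lemma residueCone_units_smul (a : Kˣ) : residueCone (a • M) (a • x) = residueCone M x := by
  ext v
  refine ((MulAction.toPerm a).exists_congr fun c => ?_).symm
  rw [MulAction.toPerm_apply, smul_assoc, ← smul_sub, maximalIdeal_smul_units_smul,
    smul_mem_units_smul_iff]

theorem exists_eq_units_smul_of_residueCone_eq (hO : O ≠ ⊤) (hM : M.FG) (hN : N.FG)
    (hx : IsPrimitiveIn M x) (hy : IsPrimitiveIn N y) (h : residueCone M x = residueCone N y) :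
    ∃ a : Kˣ, N = a • M := by
  obtain ⟨c, hc⟩ : x ∈ residueCone N y := h ▸ mem_residueCone_self
  have hc0 : c ≠ 0 := by
    rintro rfl
    exact hy.2 (by simpa using hc)
  lift c to Kˣ using hc0.isUnit
  replace hc : c • x - y ∈ maximalIdeal O • N := hc
  have hcone : residueCone (c • M) (c • x) = residueCone N (c • x) := by
    rw [residueCone_units_smul, h, residueCone_congr hc]
  have hxN : IsPrimitiveIn N (c • x) := hy.of_sub_mem hc
  have hxM : IsPrimitiveIn (c • M) (c • x) := by
    rwa [IsPrimitiveIn, maximalIdeal_smul_units_smul, smul_mem_units_smul_iff,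
      smul_mem_units_smul_iff]
  exact ⟨c, (le_of_residueCone_subset hO (hM.map _) hxM hcone.ge).antisymm
    (le_of_residueCone_subset hO hN hxN hcone.le)⟩

end ResidueCone

/-- The fibre of `ρ_B : ℙ(V) → ℙ(B/pB)` over the class of `x ∈ B ∖ pB`. -/
def reductionFiber {V : Type*} [AddCommGroup V] [Module ℚ V] (p : ℕ) (B : Set V) (x : V) :
    Set (Projectivization ℚ V) :=
  {z | ∃ v, ∃ h : v ≠ 0, Projectivization.mk ℚ v h = z ∧ ZpRelV p B v x}

section PLocal

open IsLocalRing

variable (p : ℕ) [hp : Fact p.Prime]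

/-- The ring `ℤ_(p)`, as the valuation ring of the `p`-adic valuation of `ℚ`. -/
def zpSubring : ValuationSubring ℚ :=
  (Rat.padicValuation p).valuationSubring

variable {p}

lemma mem_zpSubring {q : ℚ} : q ∈ zpSubring p ↔ ¬ p ∣ q.den :=
  (Valuation.mem_valuationSubring_iff _ _).trans Rat.padicValuation_le_one_iff

lemma zpSubring_ne_top : zpSubring p ≠ ⊤ := fun h => by
  have hinv : (p : ℚ)⁻¹ ∈ zpSubring p := h ▸ ValuationSubring.mem_top _
  rw [mem_zpSubring, Rat.inv_natCast_den_of_pos hp.out.pos] at hinv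
  exact hinv dvd_rfl

lemma mem_maximalIdeal_zpSubring {r : zpSubring p} :
    r ∈ maximalIdeal (zpSubring p) ↔ Rat.padicValuation p r < 1 :=
  (ValuationSubring.valuation_lt_one_iff _ r).trans
    (Valuation.isEquiv_valuation_valuationSubring _).lt_one_iff_lt_one.symm

lemma maximalIdeal_zpSubring : maximalIdeal (zpSubring p) = Ideal.span {(p : zpSubring p)} := by
  have hp0 : (p : ℚ) ≠ 0 := Nat.cast_ne_zero.2 hp.out.ne_zero
  refine le_antisymm (fun r hr => ?_) ?_
  · have hle : Rat.padicValuation p (r / p) ≤ 1 := by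
      rwa [map_div₀, Rat.padicValuation_self, WithZero.exp_neg, div_inv_eq_mul,
        ← WithZero.lt_mul_exp_iff_le one_ne_zero, mul_lt_mul_iff_left₀ WithZero.exp_pos,
        ← mem_maximalIdeal_zpSubring]
    exact Ideal.mem_span_singleton'.2 ⟨⟨r / p, hle⟩, Subtype.ext (div_mul_cancel₀ _ hp0)⟩
  · rw [Ideal.span_singleton_le_iff_mem, mem_maximalIdeal_zpSubring]
    exact (Rat.padicValuation_self p).trans_lt (WithZero.exp_lt_exp.2 neg_one_lt_zero)

variable {V : Type*} [AddCommGroup V] [Module ℚ V] {M N : Submodule (zpSubring p) V} {x y : V}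

lemma zpSpanV_eq_span (s : Finset V) :
    zpSpanV p s = Submodule.span (zpSubring p) (s : Set V) := by
  ext z
  constructor
  · rintro ⟨f, hf, rfl⟩
    exact sum_mem fun t ht => Submodule.smul_mem _ (⟨f t, mem_zpSubring.2 (hf t)⟩ : zpSubring p)
      (Submodule.subset_span ht)
  · intro hz
    obtain ⟨f, -, rfl⟩ := Submodule.mem_span_finset.1 hz
    exact ⟨fun t => f t, fun t => mem_zpSubring.1 (f t).2, rfl⟩

lemma pSMul_coe (M : Submodule (zpSubring p) V) :
    pSMul p (M : Set V) = (maximalIdeal (zpSubring p) • M : Submodule _ V) := by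
  rw [maximalIdeal_zpSubring, Submodule.ideal_span_singleton_smul]
  exact Set.ext fun z => exists_congr fun b => and_congr_right fun _ => eq_comm

lemma isPrimitiveIn_iff : IsPrimitiveIn M x ↔ x ∈ (M : Set V) \ pSMul p M := by
  rw [pSMul_coe]
  rfl

lemma IsPrimitiveIn.zpRelV_iff {v : V} (hx : IsPrimitiveIn M x) :
    ZpRelV p M v x ↔ v ∈ residueCone M x := by
  unfold ZpRelV
  simp only [pSMul_coe]
  constructor
  · rintro ⟨-, -, ⟨a, -, rfl⟩, ⟨b, hb0, rfl⟩, -, -, hbM, hbm, hab⟩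
    have hb : (zpSubring p).valuation b = 1 := hx.valuation_eq_one ⟨hbM, hbm⟩
    have hbinv : b⁻¹ ∈ zpSubring p := (ValuationSubring.valuation_le_one_iff _ _).1 (by simp [hb])
    refine ⟨b⁻¹ * a, ?_⟩
    have hsub : (b⁻¹ * a) • v - x = b⁻¹ • (a • v - b • x) := by
      rw [smul_sub, smul_smul, inv_smul_smul₀ hb0]
    rw [hsub]
    exact (maximalIdeal (zpSubring p) • M).smul_mem ⟨b⁻¹, hbinv⟩ hab
  · rintro ⟨c, hc⟩
    have hcv : IsPrimitiveIn M (c • v) := hx.of_sub_mem hc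
    have hc0 : c ≠ 0 := by
      rintro rfl
      exact hcv.2 (by simp)
    exact ⟨c • v, x, ⟨c, hc0, rfl⟩, ⟨1, one_ne_zero, (one_smul ℚ x).symm⟩,
      hcv.1, hcv.2, hx.1, hx.2, hc⟩

lemma IsPrimitiveIn.mk_mem_reductionFiber_iff {v : V} (hx : IsPrimitiveIn M x) (hv : v ≠ 0) :
    Projectivization.mk ℚ v hv ∈ reductionFiber p M x ↔ v ∈ residueCone M x := by
  constructor
  · rintro ⟨w, hw, hwv, hrel⟩
    obtain ⟨a, rfl⟩ := (Projectivization.mk_eq_mk_iff' ℚ w v hw hv).1 hwv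
    obtain ⟨c, hc⟩ := hx.zpRelV_iff.1 hrel
    exact ⟨c * a, by rwa [mul_smul]⟩
  · exact fun h => ⟨v, hv, rfl, hx.zpRelV_iff.2 h⟩

lemma residueCone_eq_of_reductionFiber_eq (hx : IsPrimitiveIn M x) (hy : IsPrimitiveIn N y)
    (h : reductionFiber p (M : Set V) x = reductionFiber p N y) :
    residueCone M x = residueCone N y := by
  ext v
  rcases eq_or_ne v 0 with rfl | hv
  · exact iff_of_false (fun h0 => hx.ne_zero_of_mem_residueCone h0 rfl)
      fun h0 => hy.ne_zero_of_mem_residueCone h0 rfl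
  · rw [← hx.mk_mem_reductionFiber_iff hv, h, hy.mk_mem_reductionFiber_iff hv]

end PLocal

theorem stmt7_general {p : ℕ} (hp : p.Prime) {V : Type*} [AddCommGroup V] [Module ℚ V]
    {W W' : Submodule ℚ V} {B B' : Set V} (hB : IsZpLatIn p W B) (hB' : IsZpLatIn p W' B')
    {x₀ x₀' : V} (hx₀ : x₀ ∈ B \ pSMul p B) (hx₀' : x₀' ∈ B' \ pSMul p B')
    (hfib : reductionFiber p B x₀ = reductionFiber p B' x₀') : LatEq B B' := by
  have : Fact p.Prime := ⟨hp⟩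
  obtain ⟨⟨s, rfl⟩, -⟩ := hB
  obtain ⟨⟨t, rfl⟩, -⟩ := hB'
  simp only [zpSpanV_eq_span] at hx₀ hx₀' hfib ⊢
  rw [← isPrimitiveIn_iff] at hx₀ hx₀'
  obtain ⟨a, ha⟩ := exists_eq_units_smul_of_residueCone_eq zpSubring_ne_top
    (Submodule.fg_span s.finite_toSet) (Submodule.fg_span t.finite_toSet) hx₀ hx₀'
    (residueCone_eq_of_reductionFiber_eq hx₀ hx₀' hfib)
  exact ⟨a, a.ne_zero, congrArg SetLike.coe ha⟩

/-- Lemma 3.2: if `f : ℙ(ℚ^{n+1}) → A` is induced via the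
`ℤ_(p)`-lattices `B` and `B'`, and some fiber of `ρ_B` coincides with some
fiber of `ρ_{B'}`, then `B` and `B'` are equivalent. -/
theorem stmt7 (p : ℕ) (hp : p.Prime) (n : ℕ) (hn : 1 ≤ n) (A : Type w)
    (f : Projectivization ℚ (Fin (n + 1) → ℚ) → A)
    (B B' : Set (Fin (n + 1) → ℚ))
    (hB : IsZpLatIn p ⊤ B) (hB' : IsZpLatIn p ⊤ B')
    (hfB : InducedOn f ⊤ p B) (hfB' : InducedOn f ⊤ p B')
    (x₀ x₀' : Fin (n + 1) → ℚ)
    (hx₀ : x₀ ∈ B \ pSMul p B) (hx₀' : x₀' ∈ B' \ pSMul p B')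
    (hfib : {z : Projectivization ℚ (Fin (n + 1) → ℚ) |
        ∃ v, ∃ h : v ≠ 0, Projectivization.mk ℚ v h = z ∧ ZpRelV p B v x₀} =
      {z : Projectivization ℚ (Fin (n + 1) → ℚ) |
        ∃ v, ∃ h : v ≠ 0, Projectivization.mk ℚ v h = z ∧ ZpRelV p B' v x₀'}) :
    LatEq B B' :=
  stmt7_general hp hB hB' hx₀ hx₀' hfib
end

section
/- Let p be a prime. Let L := {classes in ℙ(ℚ³) of vectors (1,a,b) with a, b ∈ ℤ_(p)} ⊂ ℙ(ℚ³), and let ρ_L: L → 𝔸²(F_p) be the reduction map sending the class of (1,a,b) to (a mod p, b mod p). Then there exist a ℤ_(p)-lattice B ⊂ ℚ³ and an injection ι: 𝔸²(F_p) ↪ ℙ(B/pB) such that ρ_B(x) = ι(ρ_L(x)) for every x ∈ L; moreover, any two ℤ_(p)-lattices B with this property (for some injection ι) are equivalent. -/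
/- Common set-up for statements about projective spaces `ℙ(V)`: flag maps,
   `ℤ_(p)`-lattices and the associated reduction maps to `ℙ(B/pB)`
   (two nonzero vectors are identified by `ρ_B` iff suitable nonzero scalar
   multiples of them lie in `B ∖ pB` and are congruent modulo `pB`). -/

universe u v w

/-- `r ∈ ℤ_(p)`. -/
def pLocalQ (p : ℕ) (r : ℚ) : Prop := ¬ (p ∣ r.den)

/-- Congruence modulo `p·ℤ_(p)` in `ℚ`. -/
def pCong (p : ℕ) (r s : ℚ) : Prop := ∃ t : ℚ, pLocalQ p t ∧ r - s = p * t

/-!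
Let `O` be a valuation ring of `K` whose maximal ideal is generated by `ϖ`. On the points `(1, a)`
with `a ∈ O ^ n`, reduction with respect to the standard lattice `O ^ (n + 1)` is coordinatewise
reduction modulo `ϖ`.

Conversely, let `B` be compatible with coordinatewise reduction. If `c • x ∈ B ∖ ϖB` and `x + ϖ • v`
reduces to the same point as `x`, but `x + v` does not, then `c • v ∈ B`. Applied to `x = (1, a)`
and the basis vectors `v`, this gives `c • O ^ (n + 1) ⊆ B`, and comparing these inclusions for
different `a` shows that one scalar `c` serves all the points `(1, a)`. For the reverse inclusion it
suffices that `c • w ∉ ϖB` whenever `w ∈ O ^ (n + 1)` has a coordinate equal to `1`. If `w₀` is a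
unit then `w` is a unit multiple of some `(1, a)`; if `w₀ ∈ ϖO` and `c • w ∈ ϖB`, then `(1, 0)` and
`(1, w₁, …, wₙ)` have the same reduction, so all coordinates of `w` are divisible by `ϖ`.
-/

open scoped Pointwise

lemma isUnit_or_dvd {R : Type*} [Monoid R] [PreValuationRing R] {ϖ : R}
    (hϖ : Irreducible ϖ) (x : R) : IsUnit x ∨ ϖ ∣ x :=
  (ValuationRing.dvd_total ϖ x).elim .inr fun h => (hϖ.dvd_iff.1 h).imp_right fun h => h.dvd

section ResidueReduction

variable {K V : Type*} [Field K] [AddCommGroup V] [Module K V] {O : ValuationSubring K} {ϖ : O}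
  {B : Submodule O V}

lemma exists_eq_mul_or_inv_mem (hϖ : Irreducible ϖ) (x : K) :
    (∃ y : O, x = ϖ * y) ∨ x ≠ 0 ∧ x⁻¹ ∈ O := by
  by_cases hx : x⁻¹ ∈ O
  · obtain rfl | hx0 := eq_or_ne x 0
    exacts [.inl ⟨0, by simp⟩, .inr ⟨hx0, hx⟩]
  lift x to O using (O.mem_or_inv_mem x).resolve_right hx
  obtain ⟨u, rfl⟩ | ⟨y, rfl⟩ := isUnit_or_dvd hϖ x
  · exact (hx (by simp [← O.valuation_le_one_iff, O.valuation_unit u])).elim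
  · exact .inl ⟨y, O.coe_mul ϖ y⟩

/-- `x ∈ B ∖ ϖB`: the vector `x` is a representative of its class in `ℙ(V)` from which the
reduction map `ρ_B` can be computed. -/
def IsPrimitive (ϖ : O) (B : Submodule O V) (x : V) : Prop :=
  x ∈ B ∧ x ∉ ϖ • B

/-- The classes of `x` and `y` have the same image under the reduction map `ρ_B` to `ℙ(B/ϖB)`,
expressed through representatives in `B ∖ ϖB` that agree modulo `ϖB`. The scalars are
automatically nonzero, since `0 ∈ ϖB`. -/
def SameReduction (ϖ : O) (B : Submodule O V) (x y : V) : Prop :=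
  ∃ c d : K, IsPrimitive ϖ B (c • x) ∧ IsPrimitive ϖ B (d • y) ∧ c • x - d • y ∈ ϖ • B

lemma IsPrimitive.of_sub_mem {x y : V} (hx : IsPrimitive ϖ B x) (hxy : y - x ∈ ϖ • B) :
    IsPrimitive ϖ B y := by
  rw [← sub_add_cancel y x]
  exact ⟨B.add_mem (Submodule.smul_le_self_of_tower ϖ B hxy) hx.1, fun h =>
    hx.2 ((Submodule.add_mem_iff_right _ hxy).1 h)⟩

lemma IsPrimitive.ne_zero_of_smul {c : K} {x : V} (hx : IsPrimitive ϖ B (c • x)) : c ≠ 0 := by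
  rintro rfl
  exact hx.2 (by simp)

lemma mem_of_smul_mem (hϖ : Irreducible ϖ) {x : V} (hx : x ∉ ϖ • B) {c : K} (hc : c • x ∈ B) :
    c ∈ O := by
  obtain ⟨y, hy⟩ | ⟨-, hc'⟩ := exists_eq_mul_or_inv_mem hϖ c⁻¹
  · obtain rfl | hc0 := eq_or_ne c 0
    · exact O.zero_mem
    · have hxy : x = ϖ • y • c • x := by
        rw [O.smul_def, O.smul_def, smul_smul, ← hy, inv_smul_smul₀ hc0]
      exact (hx <| hxy ▸ Submodule.smul_mem_pointwise_smul _ _ _ (B.smul_mem y hc)).elim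
  · rwa [inv_inv] at hc'

lemma sameReduction_iff (hϖ : Irreducible ϖ) {x y : V} {c : K} (hy : IsPrimitive ϖ B (c • y)) :
    SameReduction ϖ B x y ↔ ∃ d : K, d • c • x - c • y ∈ ϖ • B := by
  have hc := hy.ne_zero_of_smul
  constructor
  · rintro ⟨a, b, -, hb, h⟩
    have hb0 := hb.ne_zero_of_smul
    have hcb : c / b ∈ O := mem_of_smul_mem hϖ hb.2 <| by
      rw [smul_smul, div_mul_cancel₀ c hb0]
      exact hy.1
    refine ⟨a / b, ?_⟩
    convert (ϖ • B).smul_mem ⟨c / b, hcb⟩ h using 1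
    rw [O.smul_def]
    match_scalars <;> field_simp
  · rintro ⟨d, hd⟩
    rw [smul_smul] at hd
    exact ⟨d * c, c, hy.of_sub_mem hd, hy, hd⟩

lemma smul_mem_of_sameReduction (hϖ : Irreducible ϖ) {x v : V} {c : K}
    (hx : IsPrimitive ϖ B (c • x)) (hsame : SameReduction ϖ B (x + ϖ • v) x)
    (hdiff : ¬ SameReduction ϖ B (x + v) x) : c • v ∈ B := by
  have hϖ0 : (ϖ : K) ≠ 0 := by simpa using hϖ.ne_zero
  rw [sameReduction_iff hϖ hx] at hsame hdiff
  obtain ⟨d, b, hb, hdb : ϖ • b = _⟩ := hsame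
  simp only [O.smul_def] at hdb
  -- `γ = 1 - d + dϖ` satisfies `dϖ • c • (x + v) = ϖ • b + γ • c • x`. If `γ⁻¹ ∈ O` this identifies
  -- the reductions of `x + v` and `x`; otherwise `γ = ϖy`, and `d(1 - ϖ) = 1 - γ` is a unit.
  obtain ⟨y, hy⟩ | ⟨hne, hinv⟩ := exists_eq_mul_or_inv_mem hϖ (1 - d + d * ϖ)
  · have hunit : IsUnit (1 - ϖ * y) := IsLocalRing.isUnit_one_sub_self_of_mem_nonunits _ fun h =>
      hϖ.not_isUnit (isUnit_of_mul_isUnit_left h)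
    have hmul : (1 - ϖ * y) • c • v = (1 - ϖ) • b - (1 - y) • c • x := by
      refine smul_right_injective V hϖ0 ?_
      simp only [O.smul_def]
      push_cast
      have hd : d * (1 - ϖ) = 1 - ϖ * y := by linear_combination -hy
      linear_combination (norm := module) -(1 - ϖ : K) • hdb + (-hd) • c • (x + (ϖ : K) • v)
    rw [← B.smul_mem_iff_of_isUnit hunit, hmul]
    exact B.sub_mem (B.smul_mem _ hb) (B.smul_mem _ hx.1)
  · refine (hdiff ⟨(1 - d + d * ϖ)⁻¹ * d * ϖ, ?_⟩).elim
    have hmul : ((1 - d + d * ϖ)⁻¹ * d * ϖ) • c • (x + v) - c • x =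
        (ϖ : K) • (1 - d + d * ϖ)⁻¹ • b := by
      rw [smul_comm (ϖ : K), hdb]
      match_scalars <;> field
    rw [hmul]
    exact Submodule.smul_mem_pointwise_smul _ ϖ _ (B.smul_mem ⟨_, hinv⟩ hb)

end ResidueReduction

section StandardLattice

variable {K : Type*} [Field K] {O : ValuationSubring K} {ϖ : O} {ι : Type*}

/-- The inclusion of `O ^ ι` into `K ^ ι`, as an `O`-linear map. -/
def coeVec : (ι → O) →ₗ[O] ι → K :=
  (Algebra.linearMap O K).compLeft ι

@[simp]
lemma coeVec_apply (w : ι → O) (i : ι) : coeVec w i = (w i : K) :=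
  rfl

lemma coeVec_single [DecidableEq ι] (i : ι) :
    coeVec (Pi.single i (1 : O)) = Pi.single i (1 : K) := by
  ext j
  simp [Pi.single_apply, apply_ite]

variable (O ι) in
/-- The standard lattice `O ^ ι` in `K ^ ι`; up to scaling it is the only lattice compatible with
the reduction of integral affine points. -/
def standardLattice : Submodule O (ι → K) :=
  LinearMap.range coeVec

lemma coeVec_mem_standardLattice (w : ι → O) : coeVec w ∈ standardLattice O ι :=
  LinearMap.mem_range_self _ w

lemma smul_coeVec_mem_standardLattice {w : ι → O} {j : ι} (hj : w j = 1) {c : K} :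
    c • coeVec w ∈ standardLattice O ι ↔ c ∈ O := by
  constructor
  · rintro ⟨u, hu⟩
    have : (u j : K) = c := by simpa [hj] using congr_fun hu j
    exact this ▸ (u j).2
  · exact fun hc => Submodule.smul_mem _ ⟨c, hc⟩ (coeVec_mem_standardLattice w)

lemma coeVec_mem_smul_standardLattice {w : ι → O} :
    coeVec w ∈ ϖ • standardLattice O ι ↔ ∀ i, ϖ ∣ w i := by
  constructor
  · rintro ⟨_, ⟨u, rfl⟩, huw⟩ i
    exact ⟨u i, Subtype.ext (congr_fun huw i).symm⟩
  · intro h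
    choose u hu using h
    obtain rfl : w = ϖ • u := funext hu
    rw [map_smul]
    exact Submodule.smul_mem_pointwise_smul _ _ _ (coeVec_mem_standardLattice u)

variable [Finite ι]

lemma isLattice_standardLattice : (standardLattice O ι).IsLattice K where
  fg := Module.Finite.iff_fg.1 (Module.Finite.range _)
  span_eq_top := by
    classical
    refine top_le_iff.1 ((Pi.basisFun K ι).span_eq.symm.le.trans (Submodule.span_mono ?_))
    rintro _ ⟨i, rfl⟩
    rw [Pi.basisFun_apply, ← coeVec_single (O := O)]
    exact coeVec_mem_standardLattice _

lemma smul_standardLattice_le_of_single [DecidableEq ι] {B : Submodule O (ι → K)} {c : K}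
    (h : ∀ i, c • coeVec (Pi.single i (1 : O)) ∈ B) : c • standardLattice O ι ≤ B := by
  rw [standardLattice, LinearMap.range_eq_map, ← (Pi.basisFun O ι).span_eq, Submodule.map_span,
    Submodule.smul_span, Submodule.span_le]
  rintro _ ⟨_, ⟨_, ⟨i, rfl⟩, rfl⟩, rfl⟩
  simpa using h i

lemma exists_eq_smul_coeVec {z : ι → K} (hz : z ≠ 0) :
    ∃ (t : K) (w : ι → O), z = t • coeVec w ∧ ∃ j, w j = 1 := by
  obtain ⟨i₀, hi₀⟩ := Function.ne_iff.1 hz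
  have : Nonempty ι := ⟨i₀⟩
  obtain ⟨j, hj⟩ := Finite.exists_max fun i => O.valuation (z i)
  have hzj : z j ≠ 0 := fun h => hi₀ <| O.valuation.zero_iff.1 <|
    le_zero_iff.1 (by simpa [h] using hj i₀)
  have hmem (i : ι) : z i / z j ∈ O := by
    rw [← O.valuation_le_one_iff, map_div₀]
    exact div_le_one_of_le₀ (hj i) zero_le
  exact ⟨z j, fun i => ⟨z i / z j, hmem i⟩, funext fun i => (mul_div_cancel₀ _ hzj).symm,
    j, Subtype.ext (div_self hzj)⟩

end StandardLattice

section AffineSpace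

variable {K : Type*} [Field K] {O : ValuationSubring K} {ϖ : O} {n : ℕ}
  {B : Submodule O (Fin (n + 1) → K)} {c : K} {a : Fin n → O}

/-- The vector `(1, a)`, representing the point `a` of affine space in `ℙ(K ^ (n + 1))`. -/
def affinePoint (a : Fin n → O) : Fin (n + 1) → K :=
  coeVec (Fin.cons 1 a : Fin (n + 1) → O)

/-- On the integral affine points, `ρ_B` is the composite of the coordinatewise reduction `ρ_L` and
an injection; equivalently, `ρ_B` and `ρ_L` identify the same pairs of points. -/
def IsAffineCompatible (ϖ : O) (B : Submodule O (Fin (n + 1) → K)) : Prop :=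
  ∀ a a' : Fin n → O,
    SameReduction ϖ B (affinePoint a) (affinePoint a') ↔ ∀ i, ϖ ∣ a i - a' i

lemma affinePoint_add_single (a : Fin n → O) (j : Fin n) (r : O) :
    affinePoint (a + Pi.single j r) = affinePoint a + r • coeVec (Pi.single j.succ (1 : O)) := by
  rw [affinePoint, affinePoint, ← map_smul, ← map_add]
  congr 1
  ext i
  cases i using Fin.cases <;> simp [Pi.single_apply]

lemma isAffineCompatible_standardLattice (hϖ : Irreducible ϖ) :
    IsAffineCompatible ϖ (standardLattice O (Fin (n + 1))) := by
  intro a a'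
  constructor
  · rintro ⟨c, d, hc, hd, hcd⟩ i
    lift c to O using (smul_coeVec_mem_standardLattice (Fin.cons_zero _ _)).1 hc.1
    lift d to O using (smul_coeVec_mem_standardLattice (Fin.cons_zero _ _)).1 hd.1
    rw [← O.smul_def, affinePoint, ← map_smul] at hc
    rw [← O.smul_def, ← O.smul_def, affinePoint, affinePoint, ← map_smul, ← map_smul, ← map_sub,
      coeVec_mem_smul_standardLattice] at hcd
    have hunit : IsUnit c := (isUnit_or_dvd hϖ c).resolve_right fun h =>
      hc.2 (coeVec_mem_smul_standardLattice.2 fun i => h.mul_right _)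
    have hzero : ϖ ∣ c - d := by simpa using hcd 0
    have hsucc : ϖ ∣ c * a i - d * a' i := by simpa using hcd i.succ
    rw [← hunit.dvd_mul_left]
    convert hsucc.sub (hzero.mul_right (a' i)) using 1
    ring
  · intro h
    have hprim (a : Fin n → O) : IsPrimitive ϖ (standardLattice O _) (affinePoint a) :=
      ⟨coeVec_mem_standardLattice _, fun h =>
        hϖ.not_dvd_one (by simpa using coeVec_mem_smul_standardLattice.1 h 0)⟩
    refine ⟨1, 1, ?_, ?_, ?_⟩
    · simpa using hprim a
    · simpa using hprim a'
    · rw [one_smul, one_smul, affinePoint, affinePoint, ← map_sub, coeVec_mem_smul_standardLattice]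
      exact Fin.cases (by simp) (by simpa using h)

namespace IsAffineCompatible

lemma smul_standardLattice_le (hϖ : Irreducible ϖ) (hB : IsAffineCompatible ϖ B)
    (hc : IsPrimitive ϖ B (c • affinePoint a)) : c • standardLattice O (Fin (n + 1)) ≤ B := by
  have hsucc (j : Fin n) : c • coeVec (Pi.single j.succ (1 : O)) ∈ B := by
    refine smul_mem_of_sameReduction hϖ hc ?_ fun h => hϖ.not_dvd_one ?_
    · rw [← affinePoint_add_single, hB]
      intro i
      obtain rfl | hij := eq_or_ne i j <;> simp [*]
    · rw [← one_smul O (coeVec _), ← affinePoint_add_single, hB] at h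
      simpa using h j
  refine smul_standardLattice_le_of_single (Fin.cases ?_ hsucc)
  have hzero : (Pi.single 0 1 : Fin (n + 1) → O) =
      Fin.cons 1 a - ∑ j, a j • Pi.single j.succ (1 : O) := by
    ext i
    cases i using Fin.cases <;> simp [Pi.single_apply]
  rw [hzero, map_sub, map_sum, smul_sub, Finset.smul_sum]
  refine B.sub_mem hc.1 (B.sum_mem fun j _ => ?_)
  rw [map_smul, smul_comm]
  exact B.smul_mem _ (hsucc j)

lemma exists_forall_isPrimitive (hϖ : Irreducible ϖ) (hB : IsAffineCompatible ϖ B) :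
    ∃ c : K, c ≠ 0 ∧ ∀ a : Fin n → O, IsPrimitive ϖ B (c • affinePoint a) := by
  have hrefl (a : Fin n → O) : ∃ c : K, IsPrimitive ϖ B (c • affinePoint a) :=
    let ⟨c, _, hc, _⟩ := (hB a a).2 (by simp)
    ⟨c, hc⟩
  obtain ⟨c, hc⟩ := hrefl 0
  have hc0 := hc.ne_zero_of_smul
  have hle {b : Fin n → O} {s : K} (hs : IsPrimitive ϖ B (s • affinePoint b)) (a : Fin n → O) :
      s • affinePoint a ∈ B :=
    smul_standardLattice_le hϖ hB hs
      (Submodule.smul_mem_pointwise_smul _ _ _ (coeVec_mem_standardLattice _))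
  refine ⟨c, hc0, fun a => ⟨hle hc a, fun hmem => ?_⟩⟩
  obtain ⟨s, hs⟩ := hrefl a
  have hsc : s / c ∈ O := mem_of_smul_mem hϖ hc.2 <| by
    rw [smul_smul, div_mul_cancel₀ s hc0]
    exact hle hs 0
  refine hs.2 ?_
  rw [← div_mul_cancel₀ s hc0, mul_smul]
  exact (ϖ • B).smul_mem ⟨_, hsc⟩ hmem

lemma dvd_of_smul_mem (hϖ : Irreducible ϖ) (hB : IsAffineCompatible ϖ B)
    (hc : ∀ a : Fin n → O, IsPrimitive ϖ B (c • affinePoint a)) {w : Fin (n + 1) → O}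
    (hw : c • coeVec w ∈ ϖ • B) (i : Fin (n + 1)) : ϖ ∣ w i := by
  have hzero : ϖ ∣ w 0 := by
    refine (isUnit_or_dvd hϖ _).resolve_left ?_
    rintro ⟨u, hu⟩
    have hwu : w = u.1 • (Fin.cons 1 (u⁻¹.1 • Fin.tail w) : Fin (n + 1) → O) := by
      funext i
      cases i using Fin.cases with
      | zero => simp [hu]
      | succ i => exact (u.mul_inv_cancel_left _).symm
    rw [hwu, map_smul, smul_comm, Submodule.smul_mem_iff_of_isUnit _ u.isUnit] at hw
    exact (hc _).2 hw
  refine Fin.cases hzero (fun j => ?_) i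
  have hsame : SameReduction ϖ B (affinePoint (Fin.tail w))
      (affinePoint (0 : Fin n → O)) := by
    refine ⟨c, c, hc _, hc _, ?_⟩
    have hsub : (Fin.cons 1 (Fin.tail w) - Fin.cons 1 0 : Fin (n + 1) → O) =
        w - w 0 • (Fin.cons 1 0 : Fin (n + 1) → O) := by
      ext i
      cases i using Fin.cases <;> simp [Fin.tail]
    rw [← smul_sub, affinePoint, affinePoint, ← map_sub, hsub, map_sub, smul_sub, map_smul,
      smul_comm c]
    obtain ⟨y, hy⟩ := hzero
    rw [hy, mul_smul]
    exact sub_mem hw (Submodule.smul_mem_pointwise_smul _ _ _ (B.smul_mem y (hc 0).1))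
  simpa [Fin.tail] using (hB _ _).1 hsame j

lemma eq_smul_standardLattice (hϖ : Irreducible ϖ) (hB : IsAffineCompatible ϖ B) :
    ∃ c : K, c ≠ 0 ∧ B = c • standardLattice O (Fin (n + 1)) := by
  obtain ⟨c, hc0, hc⟩ := hB.exists_forall_isPrimitive hϖ
  refine ⟨c, hc0, le_antisymm (fun z hz => ?_) (hB.smul_standardLattice_le hϖ (hc 0))⟩
  obtain rfl | hz0 := eq_or_ne z 0
  · exact zero_mem _
  obtain ⟨t, w, rfl, j, hj⟩ := exists_eq_smul_coeVec (O := O) hz0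
  have hw : c • coeVec w ∉ ϖ • B := fun h =>
    hϖ.not_dvd_one (hj ▸ hB.dvd_of_smul_mem hϖ hc h j)
  have htc : t / c ∈ O := mem_of_smul_mem hϖ hw (by rwa [smul_smul, div_mul_cancel₀ t hc0])
  rw [← mul_div_cancel₀ t hc0, mul_smul]
  exact Submodule.smul_mem_pointwise_smul _ _ _
    ((standardLattice O _).smul_mem ⟨_, htc⟩ (coeVec_mem_standardLattice w))

end IsAffineCompatible

end AffineSpace

open WithZero in
lemma irreducible_of_valuation_eq_exp_neg_one {K : Type*} [Field K] {v : Valuation K ℤᵐ⁰}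
    {ϖ : v.valuationSubring} (hϖ : v ϖ = exp (-1)) : Irreducible ϖ := by
  have hunit (x : v.valuationSubring) : IsUnit x ↔ v x = 1 :=
    (Valuation.integer.integers v).isUnit_iff_valuation_eq_one
  refine ⟨fun h => ?_, ?_⟩
  · rw [(hunit ϖ).1 h, ← exp_zero, exp_inj] at hϖ
    omega
  · rintro x y rfl
    rw [v.valuationSubring.coe_mul, map_mul] at hϖ
    have hxy : v x ≠ 0 ∧ v y ≠ 0 := mul_ne_zero_iff.1 (hϖ ▸ exp_ne_zero)
    have hlog : log (v x) + log (v y) = -1 := by rw [← log_mul hxy.1 hxy.2, hϖ, log_exp]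
    have hx : log (v x) ≤ 0 := (log_le_iff_le_exp hxy.1).2 x.2
    have hy : log (v y) ≤ 0 := (log_le_iff_le_exp hxy.2).2 y.2
    rw [hunit, hunit, ← exp_log hxy.1, ← exp_log hxy.2, ← exp_zero, exp_inj, exp_inj]
    omega

section LocalIntegers

variable (p : ℕ) [Fact p.Prime]

/-- The ring `ℤ_(p)`, encoded as the valuation ring of the `p`-adic valuation on `ℚ`, so that
`ℤ_(p)`-lattices become submodules. -/
abbrev localIntegers : ValuationSubring ℚ :=
  (Rat.padicValuation p).valuationSubring

variable {p}

lemma mem_localIntegers {x : ℚ} : x ∈ localIntegers p ↔ pLocalQ p x :=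
  Rat.padicValuation_le_one_iff

lemma irreducible_localIntegers : Irreducible (p : localIntegers p) :=
  irreducible_of_valuation_eq_exp_neg_one (by simp)

lemma dvd_sub_iff_pCong {x y : localIntegers p} : (p : localIntegers p) ∣ x - y ↔ pCong p x y := by
  constructor
  · rintro ⟨t, ht⟩
    exact ⟨t, mem_localIntegers.1 t.2, by simpa using congr_arg Subtype.val ht⟩
  · rintro ⟨t, ht, h⟩
    exact ⟨⟨t, mem_localIntegers.2 ht⟩, Subtype.ext (by simpa using h)⟩

variable {V : Type*} [AddCommGroup V] [Module ℚ V]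

lemma coe_span_eq_zpSpanV (s : Finset V) :
    (Submodule.span (localIntegers p) (s : Set V) : Set V) = zpSpanV p s := by
  ext z
  constructor
  · intro hz
    obtain ⟨f, -, rfl⟩ := Submodule.mem_span_finset.1 hz
    exact ⟨fun t => f t, fun t => mem_localIntegers.1 (f t).2, rfl⟩
  · rintro ⟨f, hf, rfl⟩
    exact Submodule.sum_mem _ fun t ht =>
      Submodule.smul_mem _ (⟨f t, mem_localIntegers.2 (hf t)⟩ : localIntegers p)
        (Submodule.subset_span ht)

lemma isZpLatIn_top_iff {B : Set V} :
    IsZpLatIn p ⊤ B ↔ ∃ M : Submodule (localIntegers p) V, M.IsLattice ℚ ∧ (M : Set V) = B := by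
  constructor
  · rintro ⟨⟨s, rfl⟩, hs⟩
    rw [← coe_span_eq_zpSpanV] at hs ⊢
    exact ⟨_, ⟨⟨s, rfl⟩, hs⟩, rfl⟩
  · rintro ⟨_, ⟨⟨s, rfl⟩, hs⟩, rfl⟩
    exact ⟨⟨s, coe_span_eq_zpSpanV s⟩, hs⟩

lemma coe_smul_eq_pSMul (B : Submodule (localIntegers p) V) :
    (((p : localIntegers p) • B : Submodule _ V) : Set V) = pSMul p B := by
  ext z
  exact exists_congr fun b => and_congr_right fun _ => eq_comm

lemma zpRelV_iff {B : Submodule (localIntegers p) V} {x y : V} :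
    ZpRelV p B x y ↔ SameReduction (p : localIntegers p) B x y := by
  rw [ZpRelV, ← coe_smul_eq_pSMul]
  constructor
  · rintro ⟨_, _, ⟨a, -, rfl⟩, ⟨b, -, rfl⟩, hx, hx', hy, hy', h⟩
    exact ⟨a, b, ⟨hx, hx'⟩, ⟨hy, hy'⟩, h⟩
  · rintro ⟨a, b, hx, hy, h⟩
    exact ⟨_, _, ⟨a, hx.ne_zero_of_smul, rfl⟩, ⟨b, hy.ne_zero_of_smul, rfl⟩, hx.1, hx.2, hy.1, hy.2,
      h⟩

lemma isAffineCompatible_iff {B : Submodule (localIntegers p) (Fin 3 → ℚ)} :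
    IsAffineCompatible (p : localIntegers p) B ↔
      ∀ a b a' b' : ℚ, pLocalQ p a → pLocalQ p b → pLocalQ p a' → pLocalQ p b' →
        (ZpRelV p B ![1, a, b] ![1, a', b'] ↔ (pCong p a a' ∧ pCong p b b')) := by
  have hpoint (a : Fin 2 → localIntegers p) : affinePoint a = ![(1 : ℚ), a 0, a 1] := by
    ext i
    fin_cases i <;> rfl
  simp only [IsAffineCompatible, hpoint, ← zpRelV_iff, dvd_sub_iff_pCong, Fin.forall_fin_two]
  constructor
  · intro h a b a' b' ha hb ha' hb'
    simpa using h ![⟨a, mem_localIntegers.2 ha⟩, ⟨b, mem_localIntegers.2 hb⟩]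
      ![⟨a', mem_localIntegers.2 ha'⟩, ⟨b', mem_localIntegers.2 hb'⟩]
  · exact fun h a a' => h _ _ _ _ (mem_localIntegers.1 (a 0).2) (mem_localIntegers.1 (a 1).2)
      (mem_localIntegers.1 (a' 0).2) (mem_localIntegers.1 (a' 1).2)

end LocalIntegers

theorem stmt8_general {K : Type*} [Field K] {O : ValuationSubring K} {ϖ : O}
    (hϖ : Irreducible ϖ) (n : ℕ) :
    ∃ B : Submodule O (Fin (n + 1) → K), B.IsLattice K ∧ IsAffineCompatible ϖ B ∧
      ∀ B' : Submodule O (Fin (n + 1) → K), IsAffineCompatible ϖ B' →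
        ∃ c : K, c ≠ 0 ∧ B' = c • B :=
  ⟨standardLattice O _, isLattice_standardLattice, isAffineCompatible_standardLattice hϖ,
    fun _ hB => hB.eq_smul_standardLattice hϖ⟩

/-- Lemma 3.3: let `L ⊆ ℙ(ℚ³)` be the set of classes of
vectors `(1,a,b)` with `a, b ∈ ℤ_(p)`, and `ρ_L` the reduction
`(1,a,b) ↦ (a mod p, b mod p) ∈ 𝔸²(F_p)`.  Then there is a `ℤ_(p)`-lattice
`B ⊆ ℚ³` such that `ρ_B` factors through `ρ_L` injectively (i.e. `ρ_B = ι∘ρ_L`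
on `L` for an injection `ι : 𝔸²(F_p) ↪ ℙ(B/pB)`:  two points of `L` have the
same `ρ_B`-image iff they have the same `ρ_L`-image), and any two such
lattices are equivalent. -/
theorem stmt8 (p : ℕ) (hp : p.Prime) :
    ∃ B : Set (Fin 3 → ℚ), IsZpLatIn p ⊤ B ∧
      (∀ a b a' b' : ℚ, pLocalQ p a → pLocalQ p b → pLocalQ p a' → pLocalQ p b' →
        (ZpRelV p B ![1, a, b] ![1, a', b'] ↔ (pCong p a a' ∧ pCong p b b'))) ∧
      ∀ B' : Set (Fin 3 → ℚ), IsZpLatIn p ⊤ B' →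
        (∀ a b a' b' : ℚ, pLocalQ p a → pLocalQ p b → pLocalQ p a' → pLocalQ p b' →
          (ZpRelV p B' ![1, a, b] ![1, a', b'] ↔ (pCong p a a' ∧ pCong p b b'))) →
        LatEq B B' := by
  have : Fact p.Prime := ⟨hp⟩
  obtain ⟨B, hlat, hB, hunique⟩ := stmt8_general (irreducible_localIntegers (p := p)) 2
  refine ⟨B, isZpLatIn_top_iff.2 ⟨B, hlat, rfl⟩, isAffineCompatible_iff.1 hB, fun _ hB' h => ?_⟩
  obtain ⟨B', -, rfl⟩ := isZpLatIn_top_iff.1 hB'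
  obtain ⟨c, hc, rfl⟩ := hunique B' (isAffineCompatible_iff.2 h)
  exact ⟨c, hc, rfl⟩
end
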